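/- Suppose g(r) = o(r^{-c}) as r → ∞ for some c > d, and fix γ > 0. Let Δ_n denote the maximum vertex degree of G_n(r̂_n(γ)). Then almost surely, limsup_{n→∞} Δ_n/(log n) ≤ γ·H₊⁻¹(1/γ). -/

import Mathlib

open MeasureTheory ProbabilityTheory Filter Set

noncomputable section

namespace RCM

/-- The toroidal metric on the unit cube. -/
def torusDist {d : ℕ} (x y : EuclideanSpace ℝ (Fin d)) : ℝ :=
  ⨅ z : Fin d → ℤ, ‖x - y - (WithLp.equiv 2 (Fin d → ℝ)).symm (fun i => (z i : ℝ))‖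

/-- The half-open unit cube `S = (-1/2, 1/2]^d`. -/
def cube (d : ℕ) : Set (EuclideanSpace ℝ (Fin d)) :=
  {x | ∀ i, x i ∈ Set.Ioc (-(1/2) : ℝ) (1/2)}

/-- The random connection model: i.i.d. uniform points `X`, coupled Poisson counts `N`,
i.i.d. uniform edge variables `U`, with the three families mutually independent, and a
non-increasing connection function `g : [0,∞) → [0,1]` with finite positive integral `α`. -/
structure Model (d : ℕ) {Ω : Type*} [MeasurableSpace Ω] (P : Measure Ω) where
  g : ℝ → ℝ
  α : ℝ
  X : ℕ → Ω → EuclideanSpace ℝ (Fin d)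
  N : ℕ → Ω → ℕ
  U : ℕ → ℕ → Ω → ℝ
  g_antitone : AntitoneOn g (Set.Ici 0)
  g_mem : ∀ r : ℝ, 0 ≤ r → g r ∈ Set.Icc (0 : ℝ) 1
  g_integrable : MeasureTheory.Integrable (fun x : EuclideanSpace ℝ (Fin d) => g ‖x‖)
  α_def : α = ∫ x : EuclideanSpace ℝ (Fin d), g ‖x‖
  α_pos : 0 < α
  X_meas : ∀ i, Measurable (X i)
  X_unif : ∀ i : ℕ, 1 ≤ i → Measure.map (X i) P = volume.restrict (cube d)
  X_indep : iIndepFun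
    (fun i : {i : ℕ // 1 ≤ i} => X i) P
  N_meas : ∀ n, Measurable (N n)
  N_mono : ∀ ω, Monotone fun n => N n ω
  N_poisson : ∀ n k : ℕ,
    P {ω | N n ω = k} = ENNReal.ofReal (Real.exp (-(n : ℝ)) * (n : ℝ) ^ k / k.factorial)
  U_meas : ∀ i j, Measurable (U i j)
  U_unif : ∀ i j : ℕ, 1 ≤ i → i < j →
    Measure.map (U i j) P = volume.restrict (Set.Icc (0 : ℝ) 1)
  U_indep : iIndepFun
    (fun p : {p : ℕ × ℕ // 1 ≤ p.1 ∧ p.1 < p.2} => U p.1.1 p.1.2) P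
  families_indep : iIndep
    (![MeasurableSpace.comap (fun ω => fun i : ℕ => X i ω) inferInstance,
       MeasurableSpace.comap (fun ω => fun n : ℕ => N n ω) inferInstance,
       MeasurableSpace.comap (fun ω => fun p : ℕ × ℕ => U p.1 p.2 ω) inferInstance]) P

variable {d : ℕ} {Ω : Type*} [MeasurableSpace Ω] {P : Measure Ω}

/-- Adjacency in the graph `G_n(r)`: vertices `1 ≤ i,j ≤ N_n` are joined iff
`U_{ij} ≤ g(dist(X_i,X_j)/r)`. -/
def adj (M : Model d P) (n : ℕ) (r : ℝ) (ω : Ω) (i j : ℕ) : Prop :=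
  i ≠ j ∧ 1 ≤ i ∧ 1 ≤ j ∧ i ≤ M.N n ω ∧ j ≤ M.N n ω ∧
    M.U (min i j) (max i j) ω ≤ M.g (torusDist (M.X i ω) (M.X j ω) / r)

/-- The degree of vertex `i` in `G_n(r)`. -/
def deg (M : Model d P) (n : ℕ) (r : ℝ) (ω : Ω) (i : ℕ) : ℕ :=
  {j : ℕ | adj M n r ω i j}.ncard

/-- `W_n(r)`, the number of isolated vertices of `G_n(r)`. -/
def isolatedCount (M : Model d P) (n : ℕ) (r : ℝ) (ω : Ω) : ℕ :=
  {i : ℕ | 1 ≤ i ∧ i ≤ M.N n ω ∧ deg M n r ω i = 0}.ncard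


/-- `r̂_n(γ)` defined by `r̂_n(γ)^d = γ log n / (α n)`. -/
def rhat (M : Model d P) (γ : ℝ) (n : ℕ) : ℝ :=
  (γ * Real.log n / (M.α * n)) ^ ((1 : ℝ) / d)

/-- `d_n`, the critical parameter for absence of isolated nodes. -/
def critRadius (M : Model d P) (n : ℕ) (ω : Ω) : ℝ :=
  sInf {r : ℝ | 0 < r ∧ isolatedCount M n r ω = 0}

/-- The maximum vertex degree `Δ_n` of `G_n(r)`. -/
def maxDeg (M : Model d P) (n : ℕ) (r : ℝ) (ω : Ω) : ℕ :=
  (Finset.Icc 1 (M.N n ω)).sup (deg M n r ω)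

/-- The minimum vertex degree `δ_n` of `G_n(r)`. -/
def minDeg (M : Model d P) (n : ℕ) (r : ℝ) (ω : Ω) : ℕ :=
  sInf {k : ℕ | ∃ i, 1 ≤ i ∧ i ≤ M.N n ω ∧ deg M n r ω i = k}

/-- The length (toroidal metric) of the longest edge of `G_n(r)` (`0` if there are no edges). -/
def longestEdge (M : Model d P) (n : ℕ) (r : ℝ) (ω : Ω) : ℝ :=
  sSup ({0} ∪ {t : ℝ | ∃ i j, adj M n r ω i j ∧ t = torusDist (M.X i ω) (M.X j ω)})

/-- Connectivity of `G_n(r)`: any two vertices are joined by a path. -/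
def connectedGraph (M : Model d P) (n : ℕ) (r : ℝ) (ω : Ω) : Prop :=
  ∀ i j : ℕ, 1 ≤ i → i ≤ M.N n ω → 1 ≤ j → j ≤ M.N n ω →
    Relation.ReflTransGen (adj M n r ω) i j

/-- `H(x) = 1 - x + x log x` (with `H(0) = 1`, since `log 0 = 0` in Lean). -/
def H (x : ℝ) : ℝ := 1 - x + x * Real.log x

/-- The inverse of the restriction of `H` to `[1, ∞)`. -/
def Hplusinv (y : ℝ) : ℝ := sInf {x : ℝ | 1 ≤ x ∧ y ≤ H x}

/-- The inverse of the restriction of `H` to `[0, 1]`. -/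
def Hminusinv (y : ℝ) : ℝ := sInf {x : ℝ | 0 ≤ x ∧ H x ≤ y}

/-- The standard normal distribution function. -/
def stdNormalCDF (x : ℝ) : ℝ :=
  ∫ t in Set.Iic x, Real.exp (-t ^ 2 / 2) / Real.sqrt (2 * Real.pi)

/-!
Conditionally on the number of vertices and on the position of a vertex `i`, the other vertices are
joined to `i` independently, each with probability at most `p = α r ^ d`, whatever the position.
Averaging `x ^ deg i` first over the edge variables, then over the positions, and finally summing
over the `Poisson (n)` many vertices bounds `𝔼 ∑ i, x ^ deg i` by `n * exp (μ (x - 1))` with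
`μ = n p`. Markov's inequality gives the Chernoff bound `P (Δ_n > x μ) ≤ n * exp (-μ H(x))`.

For `r = r̂_n(γ)` we have `μ = γ log n`, so the bound is `n ^ (1 - γ H(x))` with a negative exponent
as soon as `x > H₊⁻¹(1/γ)`. This is summable along `n = k ^ m` for `m` large, even with the vertices
of time `(k + 1) ^ m` and the radius of time `k ^ m`, which changes `μ` only by the factor
`((k + 1) / k) ^ m → 1`. As `Δ_n(r)` increases in `n` and in `r` while `r̂_n(γ)` decreases in `n`,
this case controls every `n` between `k ^ m` and `(k + 1) ^ m`.
-/

open scoped ENNReal Topology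

/-! ### Series and limits -/

lemma tsum_mul_pow_pred_mul_poisson {a q : ℝ} (ha : 0 ≤ a) (hq : 0 ≤ q) :
    ∑' k : ℕ, (k * ENNReal.ofReal q ^ (k - 1))
        * ENNReal.ofReal (Real.exp (-a) * a ^ k / k.factorial)
      = ENNReal.ofReal (a * Real.exp (a * (q - 1))) := by
  have hterm (k : ℕ) : ((k + 1 : ℕ) * ENNReal.ofReal q ^ (k + 1 - 1))
        * ENNReal.ofReal (Real.exp (-a) * a ^ (k + 1) / (k + 1).factorial)
      = ENNReal.ofReal (a * Real.exp (-a) * ((a * q) ^ k / k.factorial)) := by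
    rw [← ENNReal.ofReal_natCast (k + 1), ← ENNReal.ofReal_pow hq,
      ← ENNReal.ofReal_mul (by positivity), ← ENNReal.ofReal_mul (by positivity),
      Nat.factorial_succ, Nat.add_sub_cancel]
    push_cast
    congr 1
    field_simp
    ring
  have hsum : HasSum (fun k : ℕ => a * Real.exp (-a) * ((a * q) ^ k / k.factorial))
      (a * Real.exp (a * (q - 1))) := by
    have hexp := NormedSpace.expSeries_div_hasSum_exp (a * q : ℝ)
    rw [← Real.exp_eq_exp_ℝ] at hexp
    rw [show a * (q - 1) = -a + a * q by ring, Real.exp_add, ← mul_assoc]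
    exact hexp.mul_left _
  rw [tsum_eq_zero_add' ENNReal.summable]
  simp_rw [hterm]
  rw [← ENNReal.ofReal_tsum_of_nonneg (fun k => by positivity) hsum.summable, hsum.tsum_eq,
    Nat.cast_zero, zero_mul, zero_mul, zero_add]

lemma summable_succ_pow_mul_pow_rpow_neg {m : ℕ} {s : ℝ} (hs : 1 < m * (s - 1)) :
    Summable fun k : ℕ => ((k + 1) ^ m : ℝ) * ((k : ℝ) ^ m) ^ (-s) := by
  have hdom : Summable fun k : ℕ => (2 : ℝ) ^ m * (k : ℝ) ^ (m - m * s) :=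
    (Real.summable_nat_rpow.2 (by linarith)).mul_left _
  refine hdom.of_norm_bounded_eventually_nat ?_
  filter_upwards [eventually_ge_atTop 1] with k hk
  have hk₁ : (1 : ℝ) ≤ k := by exact_mod_cast hk
  have hk₀ : (0 : ℝ) < k := by linarith
  calc ‖((k + 1) ^ m : ℝ) * ((k : ℝ) ^ m) ^ (-s)‖
      = ((k + 1) ^ m : ℝ) * ((k : ℝ) ^ m) ^ (-s) := Real.norm_of_nonneg (by positivity)
    _ ≤ (2 * k) ^ m * ((k : ℝ) ^ m) ^ (-s) := by gcongr; linarith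
    _ = 2 ^ m * (k : ℝ) ^ (m - m * s) := by
        rw [mul_pow, mul_assoc, ← Real.rpow_natCast (k : ℝ), ← Real.rpow_mul hk₀.le,
          ← Real.rpow_add hk₀]
        ring_nf

lemma tendsto_nthRoot_atTop {m : ℕ} (hm : m ≠ 0) : Tendsto (Nat.nthRoot m) atTop atTop :=
  tendsto_atTop.2 fun b => (eventually_ge_atTop (b ^ m)).mono fun _ hn =>
    (Nat.le_nthRoot_iff hm).2 hn

lemma tendsto_succ_pow_div_pow (m : ℕ) :
    Tendsto (fun k : ℕ => ((k + 1) ^ m / (k : ℝ) ^ m : ℝ)) atTop (𝓝 1) := by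
  have hratio : Tendsto (fun k : ℕ => ((k + 1) / k : ℝ)) atTop (𝓝 1) := by
    simpa [add_comm] using tendsto_add_mul_div_add_mul_atTop_nhds (1 : ℝ) 0 1 one_ne_zero
  simpa only [div_pow, one_pow] using hratio.pow m

section Independence

variable {β : Type*} [MeasurableSpace β]

lemma lintegral_comp_of_indepFun [IsFiniteMeasure P] {δ : Type*} [MeasurableSpace δ]
    {A : Ω → β} {B : Ω → δ} (hA : Measurable A) (hB : Measurable B) (hAB : IndepFun A B P)
    {f : β → δ → ℝ≥0∞} (hf : Measurable (Function.uncurry f)) :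
    ∫⁻ ω, f (A ω) (B ω) ∂P = ∫⁻ ω, ∫⁻ ω', f (A ω) (B ω') ∂P ∂P := by
  calc ∫⁻ ω, f (A ω) (B ω) ∂P
      = ∫⁻ p, f p.1 p.2 ∂(P.map fun ω => (A ω, B ω)) := (lintegral_map hf (hA.prodMk hB)).symm
    _ = ∫⁻ a, ∫⁻ b, f a b ∂(P.map B) ∂(P.map A) := by
        rw [hAB.map_prod_eq_prod_map_map hA.aemeasurable hB.aemeasurable]
        exact lintegral_prod _ hf.aemeasurable
    _ = ∫⁻ ω, ∫⁻ b, f (A ω) b ∂(P.map B) ∂P := lintegral_map hf.lintegral_prod_right' hA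
    _ = ∫⁻ ω, ∫⁻ ω', f (A ω) (B ω') ∂P ∂P :=
        lintegral_congr fun ω => lintegral_map (hf.comp measurable_prodMk_left) hB

lemma lintegral_prod_comp_of_iIndepFun {ι : Type*} [Fintype ι] {δ : ι → Type*}
    [∀ j, MeasurableSpace (δ j)] {A : Ω → β} {B : ∀ j, Ω → δ j} (hA : Measurable A)
    (hB : ∀ j, Measurable (B j)) (hBi : iIndepFun B P) (hAB : IndepFun A (fun ω j => B j ω) P)
    {f : ∀ j, β → δ j → ℝ≥0∞} (hf : ∀ j, Measurable (Function.uncurry (f j))) :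
    ∫⁻ ω, ∏ j, f j (A ω) (B j ω) ∂P = ∫⁻ ω, ∏ j, ∫⁻ ω', f j (A ω) (B j ω') ∂P ∂P := by
  have := hBi.isProbabilityMeasure
  have hprod : Measurable fun p : β × (∀ j, δ j) => ∏ j, f j p.1 (p.2 j) :=
    Finset.measurable_prod _ fun j _ =>
      (hf j).comp (measurable_fst.prodMk ((measurable_pi_apply j).comp measurable_snd))
  rw [lintegral_comp_of_indepFun (f := fun a b => ∏ j, f j a (b j)) hA (measurable_pi_iff.2 hB)
    hAB hprod]
  refine lintegral_congr fun ω => ?_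
  have hfω : ∀ j, Measurable (f j (A ω)) := fun j => (hf j).comp measurable_prodMk_left
  exact lintegral_prod_eq_prod_lintegral_of_indepFun Finset.univ (fun j ω' => f j (A ω) (B j ω'))
    (hBi.comp _ hfω) fun j => (hfω j).comp (hB j)

end Independence

/-! ### The flat torus -/

/-- The point of the lattice `ℤ^d ⊆ ℝ^d` with coordinates `z`. -/
def latticePoint (z : Fin d → ℤ) : EuclideanSpace ℝ (Fin d) :=
  (WithLp.equiv 2 (Fin d → ℝ)).symm fun i => (z i : ℝ)

@[simp]
lemma latticePoint_apply (z : Fin d → ℤ) (i : Fin d) : latticePoint z i = z i := rfl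

lemma torusDist_nonneg (x y : EuclideanSpace ℝ (Fin d)) : 0 ≤ torusDist x y :=
  Real.iInf_nonneg fun _ => norm_nonneg _

lemma measurable_torusDist :
    Measurable fun p : EuclideanSpace ℝ (Fin d) × EuclideanSpace ℝ (Fin d) =>
      torusDist p.1 p.2 := by
  unfold torusDist
  exact Measurable.iInf fun z => by fun_prop

lemma exists_norm_sub_latticePoint_le_torusDist (x y : EuclideanSpace ℝ (Fin d)) :
    ∃ z : Fin d → ℤ, ‖x - y - latticePoint z‖ ≤ torusDist x y := by
  refine ⟨fun i => round (x i - y i), le_ciInf fun z => ?_⟩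
  rw [EuclideanSpace.norm_eq, EuclideanSpace.norm_eq]
  gcongr with i
  exact round_le (x i - y i) (z i)

lemma measurableSet_cube : MeasurableSet (cube d) := by
  simp only [cube, Set.ofPred_forall]
  exact MeasurableSet.iInter fun i => measurableSet_Ioc.preimage (by fun_prop)

lemma sub_latticePoint_mem_cube_iff {x : EuclideanSpace ℝ (Fin d)} {z : Fin d → ℤ} :
    x - latticePoint z ∈ cube d ↔ ∀ i, ⌈x i - 1 / 2⌉ = z i := by
  refine forall_congr' fun i => ?_
  rw [Int.ceil_eq_iff, PiLp.sub_apply, latticePoint_apply, Set.mem_Ioc]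
  constructor <;> rintro ⟨h₁, h₂⟩ <;> constructor <;> linarith

lemma tsum_setLIntegral_cube_add_latticePoint (f : EuclideanSpace ℝ (Fin d) → ℝ≥0∞) :
    ∑' z : Fin d → ℤ, ∫⁻ x in cube d, f (x + latticePoint z) = ∫⁻ x, f x := by
  let translate (z : Fin d → ℤ) : Set (EuclideanSpace ℝ (Fin d)) :=
    {x | x - latticePoint z ∈ cube d}
  have hmeas (z) : MeasurableSet (translate z) := measurableSet_cube.preimage (by fun_prop)
  have hdisj : Pairwise (Function.onFun Disjoint translate) := fun z z' hzz' =>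
    Set.disjoint_left.2 fun x hz hz' => hzz' <| funext fun i =>
      (sub_latticePoint_mem_cube_iff.1 hz i).symm.trans (sub_latticePoint_mem_cube_iff.1 hz' i)
  have hcover : ⋃ z, translate z = Set.univ := Set.eq_univ_of_forall fun x =>
    Set.mem_iUnion.2 ⟨_, sub_latticePoint_mem_cube_iff.2 fun _ => rfl⟩
  calc ∑' z : Fin d → ℤ, ∫⁻ x in cube d, f (x + latticePoint z)
      = ∑' z, ∫⁻ x in translate z, f x := by
        refine tsum_congr fun z => ?_
        rw [← (measurePreserving_add_right volume (latticePoint z)).setLIntegral_comp_preimage_emb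
          (measurableEmbedding_addRight _) f (translate z)]
        simp [translate]
    _ = ∫⁻ x, f x := by
        rw [← lintegral_iUnion hmeas hdisj, hcover, Measure.restrict_univ]

/-! ### The connection probability -/

/-- The probability that vertices at `x` and `y` are joined in `G_n(r)`. -/
def Model.linkProb (M : Model d P) (r : ℝ) (x y : EuclideanSpace ℝ (Fin d)) : ℝ :=
  M.g (torusDist x y / r)

section LinkProb

variable (M : Model d P) {r : ℝ}

lemma Model.measurable_g_comp {β : Type*} [MeasurableSpace β] {f : β → ℝ} (hf : Measurable f)
    (hf₀ : ∀ b, 0 ≤ f b) : Measurable fun b => M.g (f b) := by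
  have hanti : Antitone fun t : ℝ => M.g (max 0 t) := fun a b hab =>
    M.g_antitone (le_max_left 0 a) (le_max_left 0 b) (max_le_max_left 0 hab)
  simpa only [Function.comp_def, max_eq_right (hf₀ _)] using hanti.measurable.comp hf

lemma Model.measurable_linkProb (hr : 0 < r) {β : Type*} [MeasurableSpace β]
    {x y : β → EuclideanSpace ℝ (Fin d)} (hx : Measurable x) (hy : Measurable y) :
    Measurable fun b => M.linkProb r (x b) (y b) :=
  M.measurable_g_comp ((measurable_torusDist.comp (hx.prodMk hy)).div_const r) fun _ =>
    div_nonneg (torusDist_nonneg _ _) hr.le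

lemma Model.linkProb_mono {r' : ℝ} (hr : 0 < r) (hrr' : r ≤ r') (x y : EuclideanSpace ℝ (Fin d)) :
    M.linkProb r x y ≤ M.linkProb r' x y :=
  have hxy := torusDist_nonneg x y
  M.g_antitone (div_nonneg hxy (hr.le.trans hrr')) (div_nonneg hxy hr.le)
    (div_le_div_of_nonneg_left hxy hr hrr')

lemma Model.lintegral_g_norm_smul (hr : 0 < r) :
    ∫⁻ x : EuclideanSpace ℝ (Fin d), ENNReal.ofReal (M.g ‖r⁻¹ • x‖)
      = ENNReal.ofReal (M.α * r ^ d) := by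
  rw [← ofReal_integral_eq_lintegral_ofReal (M.g_integrable.comp_smul (inv_ne_zero hr.ne'))
      (ae_of_all _ fun x => (M.g_mem _ (norm_nonneg _)).1),
    Measure.integral_comp_smul volume (fun x => M.g ‖x‖) r⁻¹, ← M.α_def]
  simp [abs_of_pos (pow_pos hr d), mul_comm]

-- The connection function at the nearest lattice translate is at most the sum over all translates,
-- and periodizing turns the integral over the cube into one over the whole space.
lemma Model.setLIntegral_linkProb_le (hr : 0 < r) (x : EuclideanSpace ℝ (Fin d)) :
    ∫⁻ y in cube d, ENNReal.ofReal (M.linkProb r x y) ≤ ENNReal.ofReal (M.α * r ^ d) := by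
  let f : EuclideanSpace ℝ (Fin d) → ℝ≥0∞ := fun w => ENNReal.ofReal (M.g ‖r⁻¹ • w‖)
  have hf : Measurable f :=
    (M.measurable_g_comp (by fun_prop) fun _ => norm_nonneg _).ennreal_ofReal
  have hnearest (y) : ∃ z : Fin d → ℤ,
      ENNReal.ofReal (M.linkProb r x y) ≤ f (x - (y + latticePoint z)) := by
    obtain ⟨z, hz⟩ := exists_norm_sub_latticePoint_le_torusDist x y
    refine ⟨z, ENNReal.ofReal_le_ofReal <| M.g_antitone (norm_nonneg _)
      (div_nonneg (torusDist_nonneg x y) hr.le) ?_⟩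
    rw [norm_smul, norm_inv, Real.norm_eq_abs, abs_of_pos hr, div_eq_inv_mul, ← sub_sub]
    gcongr
  calc ∫⁻ y in cube d, ENNReal.ofReal (M.linkProb r x y)
      ≤ ∫⁻ y in cube d, ∑' z : Fin d → ℤ, f (x - (y + latticePoint z)) :=
        lintegral_mono fun y => (hnearest y).choose_spec.trans (ENNReal.le_tsum _)
    _ = ∑' z : Fin d → ℤ, ∫⁻ y in cube d, f (x - (y + latticePoint z)) :=
        lintegral_tsum fun z => (hf.comp (by fun_prop)).aemeasurable
    _ = ∫⁻ y, f (x - y) := tsum_setLIntegral_cube_add_latticePoint fun y => f (x - y)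
    _ = ∫⁻ y, f y := lintegral_sub_left_eq_self f x
    _ = ENNReal.ofReal (M.α * r ^ d) := M.lintegral_g_norm_smul hr

end LinkProb

/-! ### Exponential moments of the degrees -/

/-- Positions and edge variables of all potential vertices and edges. Given the number of vertices,
they determine the graph; keeping the two apart makes their independence usable. -/
abbrev Configuration (d : ℕ) : Type := (ℕ → EuclideanSpace ℝ (Fin d)) × (ℕ × ℕ → ℝ)

/-- The random configuration underlying the model. -/
def Model.config (M : Model d P) (ω : Ω) : Configuration d :=
  (fun i => M.X i ω, fun p => M.U p.1 p.2 ω)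

/-- The set of neighbours of vertex `i` among the vertices `1, …, k` of the configuration `q`. -/
def Model.neighbors (M : Model d P) (r : ℝ) (k i : ℕ) (q : Configuration d) : Finset ℕ :=
  {j ∈ (Finset.Icc 1 k).erase i | q.2 (min i j, max i j) ≤ M.linkProb r (q.1 i) (q.1 j)}

section Degrees

variable (M : Model d P) {r : ℝ}

lemma Model.mem_neighbors {k i j : ℕ} {q : Configuration d} :
    j ∈ M.neighbors r k i q ↔
      (j ≠ i ∧ 1 ≤ j ∧ j ≤ k) ∧ q.2 (min i j, max i j) ≤ M.linkProb r (q.1 i) (q.1 j) := by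
  rw [Model.neighbors, Finset.mem_filter, Finset.mem_erase, Finset.mem_Icc]

lemma deg_eq_card_neighbors {n i : ℕ} {ω : Ω} (hi : i ∈ Finset.Icc 1 (M.N n ω)) :
    deg M n r ω i = (M.neighbors r (M.N n ω) i (M.config ω)).card := by
  obtain ⟨hi₁, hiN⟩ := Finset.mem_Icc.1 hi
  have hadj : {j | adj M n r ω i j} = M.neighbors r (M.N n ω) i (M.config ω) := by
    ext j
    rw [Finset.mem_coe, M.mem_neighbors, ne_comm]
    simp only [Set.mem_ofPred_eq, adj, Model.config, Model.linkProb, hi₁, hiN, true_and, and_assoc]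
  rw [deg, hadj, Set.ncard_coe_finset]

lemma pow_card_neighbors (a : ℝ≥0∞) (k i : ℕ) (ω : Ω) :
    a ^ (M.neighbors r k i (M.config ω)).card = ∏ j : ↥((Finset.Icc 1 k).erase i),
      if M.U (min i j) (max i j) ω ≤ M.linkProb r (M.X i ω) (M.X j ω) then a else 1 := by
  rw [Model.neighbors, ← Finset.prod_const, Finset.prod_filter, ← Finset.prod_coe_sort]
  rfl

lemma measurable_positions : Measurable fun ω i => M.X i ω := measurable_pi_iff.2 M.X_meas

lemma measurable_edgeVariables : Measurable fun ω (p : ℕ × ℕ) => M.U p.1 p.2 ω :=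
  measurable_pi_iff.2 fun p => M.U_meas p.1 p.2

lemma Model.measurable_config : Measurable M.config :=
  (measurable_positions M).prodMk (measurable_edgeVariables M)

lemma measurable_card_neighbors (hr : 0 < r) (k i : ℕ) :
    Measurable fun q => (M.neighbors r k i q).card := by
  simp only [Model.neighbors, Finset.card_filter]
  exact Finset.measurable_sum _ fun j _ => Measurable.ite
    (measurableSet_le (by fun_prop) (M.measurable_linkProb hr (by fun_prop) (by fun_prop)))
    measurable_const measurable_const

lemma indepFun_positions_edgeVariables :
    IndepFun (fun ω i => M.X i ω) (fun ω (p : ℕ × ℕ) => M.U p.1 p.2 ω) P :=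
  M.families_indep.indep (show (0 : Fin 3) ≠ 2 by decide)

lemma indepFun_N_config (n : ℕ) : IndepFun (M.N n) M.config P := by
  have hN : Measurable fun ω n => M.N n ω := measurable_pi_iff.2 M.N_meas
  have hindep := indep_iSup_of_disjoint (S := {1}) (T := {0, 2}) (fun l : Fin 3 => ?_)
    M.families_indep (by simp)
  · rw [iSup_singleton, iSup_pair] at hindep
    refine indep_of_indep_of_le_left (indep_of_indep_of_le_right hindep ?_) ?_
    · refine Measurable.comap_le (Measurable.prodMk ?_ ?_)
      · exact (comap_measurable fun ω i => M.X i ω).mono le_sup_left le_rfl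
      · exact (comap_measurable fun ω (p : ℕ × ℕ) => M.U p.1 p.2 ω).mono le_sup_right le_rfl
    · exact ((measurable_pi_apply (X := fun _ : ℕ => ℕ) n).comp
        (comap_measurable fun ω n => M.N n ω)).comap_le
  · fin_cases l
    · exact (measurable_positions M).comap_le
    · exact hN.comap_le
    · exact (measurable_edgeVariables M).comap_le

section Vertex

variable {T : Finset ℕ} {i : ℕ} (hi : 1 ≤ i) (hT : ∀ j ∈ T, 1 ≤ j) (hiT : i ∉ T)

include hi hT hiT

lemma one_le_min_and_min_lt_max (j : T) :
    1 ≤ min i (j : ℕ) ∧ min i (j : ℕ) < max i (j : ℕ) :=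
  ⟨le_min hi (hT j j.2), min_lt_max.2 (ne_of_mem_of_not_mem j.2 hiT).symm⟩

lemma iIndepFun_edgeVariables : iIndepFun (fun j : T => M.U (min i j) (max i j)) P := by
  refine M.U_indep.precomp
    (g := fun j : T => ⟨(min i j, max i j), one_le_min_and_min_lt_max hi hT hiT j⟩) fun j j' h => ?_
  simp only [Subtype.mk.injEq, Prod.mk.injEq] at h
  have := ne_of_mem_of_not_mem j.2 hiT
  have := ne_of_mem_of_not_mem j'.2 hiT
  exact Subtype.ext (by omega)

lemma indepFun_position_positions : IndepFun (M.X i) (fun ω (j : T) => M.X j ω) P := by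
  let index (j : T) : {i : ℕ // 1 ≤ i} := ⟨j, hT j j.2⟩
  have hdisj : Disjoint {⟨i, hi⟩} (Finset.univ.image index) := by
    simp only [index, Finset.disjoint_singleton_left, Finset.mem_image, Finset.mem_univ, true_and,
      Subtype.mk.injEq, not_exists]
    exact fun j => ne_of_mem_of_not_mem j.2 hiT
  exact (M.X_indep.indepFun_finset _ _ hdisj fun l => M.X_meas l).comp
    (φ := fun a => a ⟨⟨i, hi⟩, Finset.mem_singleton_self _⟩)
    (ψ := fun b (j : T) => b ⟨index j, Finset.mem_image_of_mem _ (Finset.mem_univ j)⟩)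
    (measurable_pi_apply (X := fun _ => EuclideanSpace ℝ (Fin d)) _)
    (measurable_pi_iff.2 fun j => measurable_pi_apply (X := fun _ => EuclideanSpace ℝ (Fin d)) _)

end Vertex

lemma measure_edgeVariable_le {i j : ℕ} (hi : 1 ≤ i) (hij : i < j) (t : ℝ) :
    P {ω | M.U i j ω ≤ t} ≤ ENNReal.ofReal t := by
  calc P (M.U i j ⁻¹' Iic t)
      = volume (Iic t ∩ Icc 0 1) := by
        rw [← Measure.map_apply (M.U_meas i j) measurableSet_Iic, M.U_unif i j hi hij,
          Measure.restrict_apply measurableSet_Iic]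
    _ ≤ volume (Icc 0 t) := measure_mono fun u hu => ⟨hu.2.1, hu.1⟩
    _ = ENNReal.ofReal t := by rw [Real.volume_Icc, sub_zero]

lemma lintegral_comp_N (n : ℕ) (f : ℕ → ℝ≥0∞) :
    ∫⁻ ω, f (M.N n ω) ∂P
      = ∑' k : ℕ, f k * ENNReal.ofReal (Real.exp (-(n : ℝ)) * (n : ℝ) ^ k / k.factorial) := by
  rw [← lintegral_map (measurable_of_countable f) (M.N_meas n), lintegral_countable']
  refine tsum_congr fun k => ?_
  rw [Measure.map_apply (M.N_meas n) (measurableSet_singleton k), ← M.N_poisson n k]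
  rfl

lemma sum_pow_deg (a : ℝ≥0∞) (n : ℕ) (ω : Ω) :
    ∑ i ∈ Finset.Icc 1 (M.N n ω), a ^ deg M n r ω i
      = ∑ i ∈ Finset.Icc 1 (M.N n ω), a ^ (M.neighbors r (M.N n ω) i (M.config ω)).card :=
  Finset.sum_congr rfl fun _ hi => by rw [deg_eq_card_neighbors M hi]

lemma measurable_sum_pow_card_neighbors (hr : 0 < r) (a : ℝ≥0∞) :
    Measurable fun p : ℕ × Configuration d =>
      ∑ i ∈ Finset.Icc 1 p.1, a ^ (M.neighbors r p.1 i p.2).card := by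
  refine measurable_from_prod_countable_right fun k => ?_
  exact Finset.measurable_sum (Finset.Icc 1 k) fun i _ =>
    (measurable_card_neighbors M hr k i).const_pow a

lemma measurable_sum_pow_deg (hr : 0 < r) (a : ℝ≥0∞) (n : ℕ) :
    Measurable fun ω => ∑ i ∈ Finset.Icc 1 (M.N n ω), a ^ deg M n r ω i := by
  have hNconfig : Measurable fun ω => (M.N n ω, M.config ω) :=
    (M.N_meas n).prodMk M.measurable_config
  simpa only [sum_pow_deg, Function.comp_def] using
    (measurable_sum_pow_card_neighbors M hr a).comp hNconfig

/-- The expected degree of a vertex in the model of intensity `n` on all of `ℝ^d`. It bounds the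
expected degrees on the torus, where `g` is only integrated over the unit cube. -/
def meanDeg (M : Model d P) (n : ℕ) (r : ℝ) : ℝ := n * (M.α * r ^ d)

lemma lt_maxDeg_iff {t : ℝ} (ht : 0 ≤ t) (n : ℕ) (ω : Ω) :
    t < maxDeg M n r ω ↔ ∃ i ∈ Finset.Icc 1 (M.N n ω), t < deg M n r ω i := by
  simp only [← Nat.floor_lt ht, maxDeg, Finset.lt_sup_iff]

section Moments

variable [IsProbabilityMeasure P]

lemma lintegral_ite_edgeVariable_le {i j : ℕ} (hi : 1 ≤ i) (hij : i < j) (s : ℝ≥0∞) (t : ℝ) :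
    ∫⁻ ω, (if M.U i j ω ≤ t then 1 + s else 1) ∂P ≤ 1 + s * ENNReal.ofReal t := by
  have hU : MeasurableSet {ω | M.U i j ω ≤ t} := measurableSet_le (M.U_meas i j) measurable_const
  have hind (ω : Ω) : (if M.U i j ω ≤ t then 1 + s else 1)
      = 1 + s * {ω | M.U i j ω ≤ t}.indicator 1 ω := by
    by_cases h : M.U i j ω ≤ t <;> simp [h]
  simp_rw [hind]
  rw [lintegral_add_left measurable_const, lintegral_const_mul _ (measurable_one.indicator hU),
    lintegral_indicator_one hU, lintegral_const, measure_univ, mul_one]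
  gcongr
  exact measure_edgeVariable_le M hi hij t

lemma lintegral_linkProb_position_le (hr : 0 < r) {j : ℕ} (hj : 1 ≤ j) (s : ℝ≥0∞)
    (x : EuclideanSpace ℝ (Fin d)) :
    ∫⁻ ω, (1 + s * ENNReal.ofReal (M.linkProb r x (M.X j ω))) ∂P
      ≤ 1 + s * ENNReal.ofReal (M.α * r ^ d) := by
  have hlink : Measurable fun y => ENNReal.ofReal (M.linkProb r x y) :=
    (M.measurable_linkProb hr measurable_const measurable_id).ennreal_ofReal
  have hlinkX : Measurable fun ω => ENNReal.ofReal (M.linkProb r x (M.X j ω)) :=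
    hlink.comp (M.X_meas j)
  have huniform : ∫⁻ ω, ENNReal.ofReal (M.linkProb r x (M.X j ω)) ∂P
      = ∫⁻ y in cube d, ENNReal.ofReal (M.linkProb r x y) := by
    rw [← M.X_unif j hj, lintegral_map hlink (M.X_meas j)]
  rw [lintegral_add_left measurable_const, lintegral_const_mul _ hlinkX, huniform,
    lintegral_const, measure_univ, mul_one]
  gcongr
  exact M.setLIntegral_linkProb_le hr x

lemma lintegral_prod_ite_edge_le (hr : 0 < r) {T : Finset ℕ} {i : ℕ} (hi : 1 ≤ i)
    (hT : ∀ j ∈ T, 1 ≤ j) (hiT : i ∉ T) (s : ℝ≥0∞) :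
    ∫⁻ ω, ∏ j : T,
        (if M.U (min i j) (max i j) ω ≤ M.linkProb r (M.X i ω) (M.X j ω) then 1 + s else 1) ∂P
      ≤ (1 + s * ENNReal.ofReal (M.α * r ^ d)) ^ T.card := by
  let edges (u : ℕ × ℕ → ℝ) (j : T) : ℝ := u (min i j, max i j)
  have hedges : Measurable edges := by fun_prop
  calc ∫⁻ ω, ∏ j : T,
        (if M.U (min i j) (max i j) ω ≤ M.linkProb r (M.X i ω) (M.X j ω) then 1 + s else 1) ∂P
      = ∫⁻ ω, ∏ j : T, ∫⁻ ω', (if M.U (min i j) (max i j) ω' ≤ M.linkProb r (M.X i ω) (M.X j ω)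
          then 1 + s else 1) ∂P ∂P := by
        refine lintegral_prod_comp_of_iIndepFun (measurable_positions M) (fun j => M.U_meas _ _)
          (iIndepFun_edgeVariables M hi hT hiT)
          ((indepFun_positions_edgeVariables M).comp measurable_id hedges)
          (f := fun j a u => if u ≤ M.linkProb r (a i) (a j) then 1 + s else 1) fun j => ?_
        exact Measurable.ite (measurableSet_le measurable_snd
          (M.measurable_linkProb hr (by fun_prop) (by fun_prop))) measurable_const measurable_const
    _ ≤ ∫⁻ ω, ∏ j : T, (1 + s * ENNReal.ofReal (M.linkProb r (M.X i ω) (M.X j ω))) ∂P := by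
        gcongr with ω j
        have hj := one_le_min_and_min_lt_max hi hT hiT j
        exact lintegral_ite_edgeVariable_le M hj.1 hj.2 s _
    _ = ∫⁻ ω, ∏ j : T,
          ∫⁻ ω', (1 + s * ENNReal.ofReal (M.linkProb r (M.X i ω) (M.X j ω'))) ∂P ∂P := by
        refine lintegral_prod_comp_of_iIndepFun (M.X_meas i) (B := fun j : T => M.X j)
          (fun j => M.X_meas j)
          (M.X_indep.precomp (g := fun j : T => ⟨j, hT j j.2⟩) fun j j' h => ?_)
          (indepFun_position_positions M hi hT hiT)
          (f := fun _ x y => 1 + s * ENNReal.ofReal (M.linkProb r x y)) fun _ => ?_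
        · exact Subtype.ext (Subtype.mk.inj h)
        · exact ((M.measurable_linkProb hr measurable_fst measurable_snd).ennreal_ofReal.const_mul
            s).const_add 1
    _ ≤ ∫⁻ _, ∏ _j : T, (1 + s * ENNReal.ofReal (M.α * r ^ d)) ∂P := by
        gcongr with ω j
        exact lintegral_linkProb_position_le M hr (hT j j.2) s _
    _ = (1 + s * ENNReal.ofReal (M.α * r ^ d)) ^ T.card := by
        rw [lintegral_const, measure_univ, mul_one, Finset.prod_const, Finset.card_univ,
          Fintype.card_coe]

lemma lintegral_pow_card_neighbors_le (hr : 0 < r) {k i : ℕ} (hi : i ∈ Finset.Icc 1 k)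
    (s : ℝ≥0∞) :
    ∫⁻ ω, (1 + s) ^ (M.neighbors r k i (M.config ω)).card ∂P
      ≤ (1 + s * ENNReal.ofReal (M.α * r ^ d)) ^ (k - 1) := by
  have hpos : ∀ j ∈ (Finset.Icc 1 k).erase i, 1 ≤ j := fun j hj =>
    (Finset.mem_Icc.1 (Finset.mem_of_mem_erase hj)).1
  have hbound := lintegral_prod_ite_edge_le M hr (Finset.mem_Icc.1 hi).1 hpos
    (Finset.notMem_erase i _) s
  simp_rw [pow_card_neighbors]
  rwa [Finset.card_erase_of_mem hi, Nat.card_Icc, Nat.add_sub_cancel] at hbound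

lemma lintegral_sum_pow_card_neighbors_le (hr : 0 < r) (k : ℕ) (s : ℝ≥0∞) :
    ∫⁻ ω, ∑ i ∈ Finset.Icc 1 k, (1 + s) ^ (M.neighbors r k i (M.config ω)).card ∂P
      ≤ k * (1 + s * ENNReal.ofReal (M.α * r ^ d)) ^ (k - 1) := by
  have hmeas (i : ℕ) : Measurable fun ω => (1 + s) ^ (M.neighbors r k i (M.config ω)).card :=
    ((measurable_card_neighbors M hr k i).comp M.measurable_config).const_pow _
  calc ∫⁻ ω, ∑ i ∈ Finset.Icc 1 k, (1 + s) ^ (M.neighbors r k i (M.config ω)).card ∂P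
      = ∑ i ∈ Finset.Icc 1 k, ∫⁻ ω, (1 + s) ^ (M.neighbors r k i (M.config ω)).card ∂P :=
        lintegral_finsetSum _ fun i _ => hmeas i
    _ ≤ ∑ _i ∈ Finset.Icc 1 k, (1 + s * ENNReal.ofReal (M.α * r ^ d)) ^ (k - 1) :=
        Finset.sum_le_sum fun i hi => lintegral_pow_card_neighbors_le M hr hi s
    _ = k * (1 + s * ENNReal.ofReal (M.α * r ^ d)) ^ (k - 1) := by
        rw [Finset.sum_const, Nat.card_Icc, Nat.add_sub_cancel, nsmul_eq_mul]

lemma lintegral_sum_pow_deg_le (hr : 0 < r) (n : ℕ) {s : ℝ} (hs : 0 ≤ s) :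
    ∫⁻ ω, ∑ i ∈ Finset.Icc 1 (M.N n ω), (1 + ENNReal.ofReal s) ^ deg M n r ω i ∂P
      ≤ ENNReal.ofReal (n * Real.exp (meanDeg M n r * s)) := by
  have hp : 0 ≤ M.α * r ^ d := by have := M.α_pos; positivity
  have hbase : 1 + ENNReal.ofReal s * ENNReal.ofReal (M.α * r ^ d)
      = ENNReal.ofReal (1 + s * (M.α * r ^ d)) := by
    rw [ENNReal.ofReal_add zero_le_one (by positivity), ENNReal.ofReal_one, ENNReal.ofReal_mul hs]
  calc ∫⁻ ω, ∑ i ∈ Finset.Icc 1 (M.N n ω), (1 + ENNReal.ofReal s) ^ deg M n r ω i ∂P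
      = ∫⁻ ω, ∫⁻ ω', ∑ i ∈ Finset.Icc 1 (M.N n ω),
          (1 + ENNReal.ofReal s) ^ (M.neighbors r (M.N n ω) i (M.config ω')).card ∂P ∂P := by
        simp_rw [sum_pow_deg]
        exact lintegral_comp_of_indepFun (M.N_meas n) M.measurable_config (indepFun_N_config M n)
          (f := fun k q => ∑ i ∈ Finset.Icc 1 k,
            (1 + ENNReal.ofReal s) ^ (M.neighbors r k i q).card)
          (measurable_sum_pow_card_neighbors M hr _)
    _ ≤ ∫⁻ ω, M.N n ω * ENNReal.ofReal (1 + s * (M.α * r ^ d)) ^ (M.N n ω - 1) ∂P := by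
        rw [← hbase]
        exact lintegral_mono fun ω => lintegral_sum_pow_card_neighbors_le M hr (M.N n ω) _
    _ = ENNReal.ofReal (n * Real.exp (n * (1 + s * (M.α * r ^ d) - 1))) := by
        rw [lintegral_comp_N M n fun k => k * ENNReal.ofReal (1 + s * (M.α * r ^ d)) ^ (k - 1),
          tsum_mul_pow_pred_mul_poisson n.cast_nonneg (by positivity)]
    _ = ENNReal.ofReal (n * Real.exp (meanDeg M n r * s)) := by
        rw [meanDeg]
        ring_nf

lemma measure_lt_maxDeg_le (hr : 0 < r) {x : ℝ} (hx : 1 ≤ x) (n : ℕ) :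
    P {ω | x * meanDeg M n r < maxDeg M n r ω}
      ≤ ENNReal.ofReal (n * Real.exp (-(meanDeg M n r * H x))) := by
  have hx₀ : 0 < x := one_pos.trans_le hx
  have hmean : 0 ≤ meanDeg M n r := by have := M.α_pos; rw [meanDeg]; positivity
  have hbase : 1 + ENNReal.ofReal (x - 1) = ENNReal.ofReal x := by
    rw [← ENNReal.ofReal_one, ← ENNReal.ofReal_add zero_le_one (sub_nonneg.2 hx), add_sub_cancel]
  have hmoment := lintegral_sum_pow_deg_le M hr n (sub_nonneg.2 hx)
  rw [hbase] at hmoment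
  set ε : ℝ≥0∞ := ENNReal.ofReal (x ^ (x * meanDeg M n r)) with hε
  have hsub : {ω | x * meanDeg M n r < maxDeg M n r ω}
      ⊆ {ω | ε ≤ ∑ i ∈ Finset.Icc 1 (M.N n ω), ENNReal.ofReal x ^ deg M n r ω i} := by
    intro ω hω
    obtain ⟨i, hi, hdeg⟩ := (lt_maxDeg_iff M (by positivity) n ω).1 hω
    calc ε ≤ ENNReal.ofReal (x ^ (deg M n r ω i : ℝ)) :=
          ENNReal.ofReal_le_ofReal (Real.rpow_le_rpow_of_exponent_le hx hdeg.le)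
      _ = ENNReal.ofReal x ^ deg M n r ω i := by
          rw [Real.rpow_natCast, ENNReal.ofReal_pow hx₀.le]
      _ ≤ ∑ i ∈ Finset.Icc 1 (M.N n ω), ENNReal.ofReal x ^ deg M n r ω i :=
          Finset.single_le_sum (f := fun i => ENNReal.ofReal x ^ deg M n r ω i)
            (fun _ _ => zero_le) hi
  calc P {ω | x * meanDeg M n r < maxDeg M n r ω}
      ≤ (∫⁻ ω, ∑ i ∈ Finset.Icc 1 (M.N n ω), ENNReal.ofReal x ^ deg M n r ω i ∂P) / ε :=
        (measure_mono hsub).trans (meas_ge_le_lintegral_div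
          (measurable_sum_pow_deg M hr _ n).aemeasurable
          (ENNReal.ofReal_pos.2 (by positivity)).ne' ENNReal.ofReal_ne_top)
    _ ≤ ENNReal.ofReal (n * Real.exp (meanDeg M n r * (x - 1))) / ε := by gcongr
    _ = ENNReal.ofReal (n * Real.exp (-(meanDeg M n r * H x))) := by
        rw [hε, ← ENNReal.ofReal_div_of_pos (by positivity), Real.rpow_def_of_pos hx₀,
          mul_div_assoc, ← Real.exp_sub, H]
        ring_nf

end Moments

end Degrees

/-! ### The rate function -/

open InformationTheory in
lemma H_eq_klFun : H = klFun := by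
  funext x
  rw [H, klFun]
  ring

lemma H_nonneg {x : ℝ} (hx : 0 ≤ x) : 0 ≤ H x := by
  rw [H_eq_klFun]
  exact InformationTheory.klFun_nonneg hx

lemma strictMonoOn_H : StrictMonoOn H (Ici 1) := by
  rw [H_eq_klFun]
  refine strictMonoOn_of_deriv_pos (convex_Ici 1) InformationTheory.continuous_klFun.continuousOn
    fun x hx => ?_
  rw [interior_Ici] at hx
  rw [InformationTheory.deriv_klFun]
  exact Real.log_pos hx

lemma nonempty_setOf_le_H (y : ℝ) : {x | 1 ≤ x ∧ y ≤ H x}.Nonempty := by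
  rw [H_eq_klFun]
  exact ((eventually_ge_atTop 1).and
    (InformationTheory.tendsto_klFun_atTop.eventually_ge_atTop y)).exists

lemma one_le_Hplusinv (y : ℝ) : 1 ≤ Hplusinv y :=
  le_csInf (nonempty_setOf_le_H y) fun _ hx => hx.1

lemma lt_H_of_Hplusinv_lt {x y : ℝ} (hxy : Hplusinv y < x) : y < H x := by
  obtain ⟨z, ⟨hz, hyz⟩, hzx⟩ := exists_lt_of_csInf_lt (nonempty_setOf_le_H y) hxy
  exact hyz.trans_lt (strictMonoOn_H hz (hz.trans hzx.le) hzx)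

/-! ### Monotonicity and the radii -/

section Interpolation

variable (M : Model d P)

lemma adj_mono {n n' : ℕ} (hn : n ≤ n') {r r' : ℝ} (hr : 0 < r) (hrr' : r ≤ r') {ω : Ω} {i j : ℕ}
    (hadj : adj M n r ω i j) : adj M n' r' ω i j := by
  obtain ⟨hij, hi, hj, hiN, hjN, hU⟩ := hadj
  have hN : M.N n ω ≤ M.N n' ω := M.N_mono ω hn
  exact ⟨hij, hi, hj, hiN.trans hN, hjN.trans hN, hU.trans (M.linkProb_mono hr hrr' _ _)⟩

lemma deg_mono {n n' : ℕ} (hn : n ≤ n') {r r' : ℝ} (hr : 0 < r) (hrr' : r ≤ r') (ω : Ω) :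
    deg M n r ω ≤ deg M n' r' ω := fun _ =>
  Set.ncard_le_ncard (fun _ => adj_mono M hn hr hrr')
    ((Set.finite_Iic (M.N n' ω)).subset fun _ hj => hj.2.2.2.2.1)

lemma maxDeg_mono {n n' : ℕ} (hn : n ≤ n') {r r' : ℝ} (hr : 0 < r) (hrr' : r ≤ r') (ω : Ω) :
    maxDeg M n r ω ≤ maxDeg M n' r' ω :=
  (Finset.sup_mono (Finset.Icc_subset_Icc_right (M.N_mono ω hn))).trans
    (Finset.sup_mono_fun fun i _ => deg_mono M hn hr hrr' ω i)

variable {γ : ℝ} (hγ : 0 < γ)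

include hγ

lemma rhat_pos {n : ℕ} (hn : 2 ≤ n) : 0 < rhat M γ n := by
  have hlog : 0 < Real.log n := Real.log_pos (by exact_mod_cast hn)
  have hα := M.α_pos
  rw [rhat]
  positivity

lemma antitoneOn_rhat : AntitoneOn (rhat M γ) (Ici 3) := by
  intro n hn n' _ hnn'
  have hα := M.α_pos
  have hrhat (l : ℕ) : rhat M γ l = (γ / M.α * (Real.log l / l)) ^ ((1 : ℝ) / d) := by
    rw [rhat, mul_div_mul_comm]
  have he : Real.exp 1 ≤ n := Real.exp_one_lt_three.le.trans (by exact_mod_cast hn)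
  have hle : (n : ℝ) ≤ n' := by exact_mod_cast hnn'
  rw [hrhat, hrhat]
  gcongr ?_ ^ _
  exact mul_le_mul_of_nonneg_left
    (Real.log_div_self_antitoneOn he (he.trans hle) hle) (by positivity)

lemma meanDeg_rhat (hd : d ≠ 0) (n' n : ℕ) :
    meanDeg M n' (rhat M γ n) = n' / n * (γ * Real.log n) := by
  have hα := M.α_pos
  rw [meanDeg, rhat, one_div, Real.rpow_inv_natCast_pow (by positivity) hd, mul_div_mul_comm]
  field_simp

lemma measure_lt_maxDeg_rhat_le [IsProbabilityMeasure P] (hd : d ≠ 0) {y : ℝ} (hy : 1 ≤ y)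
    {n n' : ℕ} (hn : 2 ≤ n) (hnn' : n ≤ n') :
    P {ω | y * (n' / n * (γ * Real.log n)) < maxDeg M n' (rhat M γ n) ω}
      ≤ ENNReal.ofReal (n' * (n : ℝ) ^ (-(γ * H y))) := by
  have hn₀ : (0 : ℝ) < n := by positivity
  have hratio : (1 : ℝ) ≤ n' / n := (one_le_div hn₀).2 (by exact_mod_cast hnn')
  have hexp : 0 ≤ γ * Real.log n * H y :=
    mul_nonneg (mul_nonneg hγ.le (Real.log_natCast_nonneg n)) (H_nonneg (one_pos.le.trans hy))
  rw [← meanDeg_rhat M hγ hd]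
  refine (measure_lt_maxDeg_le M (rhat_pos M hγ hn) hy n').trans (ENNReal.ofReal_le_ofReal ?_)
  rw [meanDeg_rhat M hγ hd, Real.rpow_def_of_pos hn₀]
  gcongr
  linarith [le_mul_of_one_le_left hexp hratio]

lemma ae_eventually_maxDeg_pow_le [IsProbabilityMeasure P] (hd : d ≠ 0) {y : ℝ} (hy : 1 ≤ y)
    {m : ℕ} (hm : 1 < m * (γ * H y - 1)) :
    ∀ᵐ ω ∂P, ∀ᶠ k : ℕ in atTop, (maxDeg M ((k + 1) ^ m) (rhat M γ (k ^ m)) ω : ℝ)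
      ≤ y * ((k + 1) ^ m / (k : ℝ) ^ m * (γ * Real.log ((k : ℝ) ^ m))) := by
  have hm₀ : m ≠ 0 := by rintro rfl; norm_num at hm
  let bad (k : ℕ) : Set Ω := {ω | y * ((k + 1) ^ m / (k : ℝ) ^ m * (γ * Real.log ((k : ℝ) ^ m)))
    < maxDeg M ((k + 1) ^ m) (rhat M γ (k ^ m)) ω}
  have hbad (k : ℕ) (hk : 2 ≤ k) :
      P (bad k) ≤ ENNReal.ofReal ((k + 1) ^ m * ((k : ℝ) ^ m) ^ (-(γ * H y))) := by
    have hle := measure_lt_maxDeg_rhat_le M hγ hd hy (hk.trans (Nat.le_self_pow hm₀ k))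
      (Nat.pow_le_pow_left k.le_succ m)
    push_cast at hle
    exact hle
  have hsum : ∑' k, P (bad (k + 2)) ≠ ∞ :=
    ne_top_of_le_ne_top ((summable_nat_add_iff 2).2
      (summable_succ_pow_mul_pow_rpow_neg hm)).tsum_ofReal_ne_top
      (ENNReal.tsum_le_tsum fun k => hbad (k + 2) (by omega))
  filter_upwards [ae_eventually_notMem hsum] with ω hω
  rw [← map_add_atTop_eq_nat 2, eventually_map]
  exact hω.mono fun k hk => not_lt.1 hk

lemma ae_eventually_maxDeg_rhat_le [IsProbabilityMeasure P] (hd : d ≠ 0) {x : ℝ}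
    (hx : Hplusinv (1 / γ) < x) :
    ∀ᵐ ω ∂P, ∀ᶠ n : ℕ in atTop, (maxDeg M n (rhat M γ n) ω : ℝ) ≤ γ * x * Real.log n := by
  obtain ⟨y, hy, hyx⟩ := exists_between hx
  have hy₁ : 1 ≤ y := (one_le_Hplusinv _).trans hy.le
  have hH : 1 < γ * H y := (div_lt_iff₀' hγ).1 (lt_H_of_Hplusinv_lt hy)
  obtain ⟨m, hm⟩ := exists_lt_nsmul (sub_pos.2 hH) 1
  rw [nsmul_eq_mul] at hm
  have hm₀ : m ≠ 0 := by rintro rfl; norm_num at hm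
  have hratio : ∀ᶠ k : ℕ in atTop, ((k + 1) ^ m / (k : ℝ) ^ m : ℝ) ≤ x / y :=
    (tendsto_succ_pow_div_pow m).eventually_le_const ((one_lt_div (by linarith)).2 hyx)
  filter_upwards [ae_eventually_maxDeg_pow_le M hγ hd hy₁ hm] with ω hω
  filter_upwards [(tendsto_nthRoot_atTop hm₀).eventually
    (hω.and (hratio.and (eventually_ge_atTop 3)))] with n ⟨hdeg, hr, hk⟩
  set k := Nat.nthRoot m n
  have hkn : k ^ m ≤ n := Nat.pow_nthRoot_le (.inl hm₀)
  have hnk : n ≤ (k + 1) ^ m := (Nat.lt_pow_nthRoot_add_one hm₀ n).le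
  have hkm : 3 ≤ k ^ m := hk.trans (Nat.le_self_pow hm₀ k)
  have hradius : rhat M γ n ≤ rhat M γ (k ^ m) := antitoneOn_rhat M hγ hkm (hkm.trans hkn) hkn
  have hlog : Real.log ((k : ℝ) ^ m) ≤ Real.log n :=
    Real.log_le_log (by positivity) (by exact_mod_cast hkn)
  have hlog₀ : 0 ≤ Real.log ((k : ℝ) ^ m) := by exact_mod_cast Real.log_natCast_nonneg (k ^ m)
  have hx₀ : 0 ≤ x / y := div_nonneg (by linarith) (by linarith)
  calc (maxDeg M n (rhat M γ n) ω : ℝ)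
      ≤ maxDeg M ((k + 1) ^ m) (rhat M γ (k ^ m)) ω := by
        exact_mod_cast maxDeg_mono M hnk (rhat_pos M hγ (by omega)) hradius ω
    _ ≤ y * ((k + 1) ^ m / (k : ℝ) ^ m * (γ * Real.log ((k : ℝ) ^ m))) := hdeg
    _ ≤ y * (x / y * (γ * Real.log n)) := by gcongr
    _ = γ * x * Real.log n := by field_simp

theorem maxDeg_limsup_le_general [IsProbabilityMeasure P] (hd : d ≠ 0) :
    ∀ᵐ ω ∂P, Filter.limsup
      (fun n : ℕ => (maxDeg M n (rhat M γ n) ω : ℝ) / Real.log n) atTop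
        ≤ γ * Hplusinv (1 / γ) := by
  obtain ⟨x, -, hx, hlim⟩ := exists_seq_strictAnti_tendsto (Hplusinv (1 / γ))
  filter_upwards [ae_all_iff.2 fun l => ae_eventually_maxDeg_rhat_le M hγ hd (hx l)] with ω hω
  refine ge_of_tendsto' (hlim.const_mul γ) fun l => limsup_le_of_le ?_ ?_
  · exact isCoboundedUnder_le_of_le atTop (x := 0) fun n =>
      div_nonneg (Nat.cast_nonneg _) (Real.log_natCast_nonneg n)
  · filter_upwards [hω l, eventually_ge_atTop 2] with n hn hn₂
    exact (div_le_iff₀ (Real.log_pos (by exact_mod_cast hn₂))).2 hn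

end Interpolation

/-- Theorem 3(i): a.s. `limsup Δ_n/log n ≤ γ H₊⁻¹(1/γ)`. -/
theorem maxDeg_limsup_le (hd : 2 ≤ d) [IsProbabilityMeasure P] (M : Model d P)
    {c : ℝ} (hc : (d : ℝ) < c)
    (hg : M.g =o[atTop] fun r : ℝ => r ^ (-c))
    {γ : ℝ} (hγ : 0 < γ) :
    ∀ᵐ ω ∂P, Filter.limsup
      (fun n : ℕ => (maxDeg M n (rhat M γ n) ω : ℝ) / Real.log n) atTop
        ≤ γ * Hplusinv (1 / γ) :=
  maxDeg_limsup_le_general M hγ (by omega)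

end RCM
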